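/- Every convex multiplicative system of means is equal to the power mean M_p for some p ∈ [1,∞]; that is, if M is a system of means that is both convex and multiplicative, then there exists p ∈ [1,∞] such that M(w,x) = M_p(w,x) for every n ≥ 1, every w ∈ Δ_n and every x ∈ (ℝ≥0)^n. -/

import Mathlib

open scoped NNReal ENNReal BigOperators

/-- The power mean `M_p` of order `p ∈ [0,∞]` with weights `w` and arguments `x`. -/
noncomputable def powerMean (p : ℝ≥0∞) {n : ℕ} (w x : Fin n → ℝ≥0) : ℝ≥0 :=
  if p = ∞ then (Finset.univ.filter (fun i => 0 < w i)).sup x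
  else if p = 0 then ∏ i, x i ^ ((w i : ℝ))
  else (∑ i, w i * x i ^ p.toReal) ^ (1 / p.toReal)

/-- A system of means: for each `n`, a function `M n : Δ_n × ℝ≥0ⁿ → ℝ≥0`
(defined on all of `ℝ≥0ⁿ × ℝ≥0ⁿ`, with the axioms demanded only when `∑ w = 1`),
satisfying functoriality, consistency and monotonicity. -/
structure MeanSystem where
  M : ∀ n : ℕ, (Fin n → ℝ≥0) → (Fin n → ℝ≥0) → ℝ≥0
  functorial : ∀ {m n : ℕ} (f : Fin m → Fin n) (w : Fin m → ℝ≥0),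
    (∑ i, w i) = 1 → ∀ x : Fin n → ℝ≥0,
      M n (fun j => ∑ i ∈ Finset.univ.filter (fun i => f i = j), w i) x = M m w (x ∘ f)
  consistent : ∀ c : ℝ≥0, M 1 (fun _ => 1) (fun _ => c) = c
  mono : ∀ {n : ℕ} (w x y : Fin n → ℝ≥0), (∑ i, w i) = 1 →
    (∀ i, x i ≤ y i) → M n w x ≤ M n w y

/-- Multiplicativity of a system of means, with respect to the fixed bijection
`finProdFinEquiv : Fin m × Fin n ≃ Fin (m * n)`. -/
def MeanSystem.IsMultiplicative (S : MeanSystem) : Prop :=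
  ∀ {m n : ℕ} (w x : Fin m → ℝ≥0) (v y : Fin n → ℝ≥0),
    (∑ i, w i) = 1 → (∑ j, v j) = 1 →
    S.M (m * n) (fun k => w (finProdFinEquiv.symm k).1 * v (finProdFinEquiv.symm k).2)
        (fun k => x (finProdFinEquiv.symm k).1 * y (finProdFinEquiv.symm k).2)
      = S.M m w x * S.M n v y

/-- Convexity of a system of means. -/
def MeanSystem.IsConvex (S : MeanSystem) : Prop :=
  ∀ {n : ℕ} (w x y : Fin n → ℝ≥0), (∑ i, w i) = 1 →
    S.M n w (fun i => (x i + y i) / 2) ≤ max (S.M n w x) (S.M n w y)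

namespace MeanSystem

variable (S : MeanSystem)

/-- The mean on an arbitrary finite index type. -/
noncomputable def G {ι : Type} [Fintype ι] (w x : ι → ℝ≥0) : ℝ≥0 :=
  S.M (Fintype.card ι) (fun k => w ((Fintype.equivFin ι).symm k))
    (fun k => x ((Fintype.equivFin ι).symm k))

lemma sum_equivFin {ι : Type} [Fintype ι] (w : ι → ℝ≥0) (hw : ∑ i, w i = 1) :
    ∑ k, w ((Fintype.equivFin ι).symm k) = 1 := by
  rw [← hw]; exact Equiv.sum_comp (Fintype.equivFin ι).symm w

open Classical in
lemma M_funct {m n : ℕ} (f : Fin m → Fin n) (w : Fin m → ℝ≥0) (hw : ∑ i, w i = 1)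
    (v x : Fin n → ℝ≥0) (hv : ∀ j, v j = ∑ i, if f i = j then w i else 0) :
    S.M n v x = S.M m w (x ∘ f) := by
  rw [← S.functorial f w hw x]
  congr 1
  funext j
  rw [hv, Finset.sum_filter]

open Classical in
lemma G_funct {ι κ : Type} [Fintype ι] [Fintype κ] (f : ι → κ) (w : ι → ℝ≥0)
    (hw : ∑ i, w i = 1) (v x : κ → ℝ≥0) (hv : ∀ j, v j = ∑ i, if f i = j then w i else 0) :
    S.G v x = S.G w (fun i => x (f i)) := by
  unfold G
  rw [S.M_funct (fun k => Fintype.equivFin κ (f ((Fintype.equivFin ι).symm k)))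
    (fun k => w ((Fintype.equivFin ι).symm k)) (sum_equivFin w hw)]
  · congr 1
    funext k
    simp
  · intro j
    rw [hv, ← Equiv.sum_comp (Fintype.equivFin ι).symm]
    refine Finset.sum_congr rfl fun i _ => ?_
    simp only [Equiv.eq_symm_apply]

lemma G_equiv {ι κ : Type} [Fintype ι] [Fintype κ] (e : ι ≃ κ) (w x : κ → ℝ≥0)
    (hw : ∑ i, w i = 1) : S.G w x = S.G (fun i => w (e i)) (fun i => x (e i)) := by
  classical
  refine S.G_funct e _ ?_ _ _ ?_
  · rw [← hw]; exact Equiv.sum_comp e w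
  · intro j
    rw [Equiv.sum_comp e (fun i => if i = j then w i else 0)]
    simp

lemma G_fin {n : ℕ} (w x : Fin n → ℝ≥0) (hw : ∑ i, w i = 1) : S.G w x = S.M n w x := by
  classical
  unfold G
  symm
  refine S.M_funct (Fintype.equivFin (Fin n)).symm _ (sum_equivFin w hw) _ _ ?_
  intro j
  rw [Equiv.sum_comp (Fintype.equivFin (Fin n)).symm (fun i => if i = j then w i else 0)]
  simp

lemma G_mono {ι : Type} [Fintype ι] (w x y : ι → ℝ≥0) (hw : ∑ i, w i = 1)
    (h : ∀ i, x i ≤ y i) : S.G w x ≤ S.G w y :=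
  S.mono _ _ _ (sum_equivFin w hw) fun _ => h _

lemma G_const {ι : Type} [Fintype ι] (w : ι → ℝ≥0) (hw : ∑ i, w i = 1) (c : ℝ≥0) :
    S.G w (fun _ => c) = c := by
  classical
  rw [← S.G_funct (fun _ : ι => (0 : Fin 1)) w hw (fun _ => 1) (fun _ => c), S.G_fin _ _ (by simp),
    S.consistent]
  intro j
  rw [← hw]
  refine Finset.sum_congr rfl fun i _ => ?_
  rw [if_pos (Subsingleton.elim _ _)]

variable {S}

lemma G_convex (hconv : S.IsConvex) {ι : Type} [Fintype ι] (w x y : ι → ℝ≥0)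
    (hw : ∑ i, w i = 1) : S.G w (fun i => (x i + y i) / 2) ≤ max (S.G w x) (S.G w y) :=
  hconv _ _ _ (sum_equivFin w hw)

lemma sum_prod_one {ι κ : Type} [Fintype ι] [Fintype κ] (w : ι → ℝ≥0) (v : κ → ℝ≥0)
    (hw : ∑ i, w i = 1) (hv : ∑ i, v i = 1) : ∑ k : ι × κ, w k.1 * v k.2 = 1 := by
  rw [Fintype.sum_prod_type]
  simp [← Finset.mul_sum, hw, hv]

lemma G_mul (hmul : S.IsMultiplicative) {ι κ : Type} [Fintype ι] [Fintype κ]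
    (w x : ι → ℝ≥0) (v y : κ → ℝ≥0) (hw : ∑ i, w i = 1) (hv : ∑ i, v i = 1) :
    S.G (fun k : ι × κ => w k.1 * v k.2) (fun k => x k.1 * y k.2) = S.G w x * S.G v y := by
  have h1 := hmul (fun k => w ((Fintype.equivFin ι).symm k)) (fun k => x ((Fintype.equivFin ι).symm k))
    (fun k => v ((Fintype.equivFin κ).symm k)) (fun k => y ((Fintype.equivFin κ).symm k))
    (sum_equivFin w hw) (sum_equivFin v hv)
  change _ = S.M _ _ _ * S.M _ _ _
  rw [← h1, ← S.G_fin (n := Fintype.card ι * Fintype.card κ)]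
  · have := S.G_equiv (finProdFinEquiv.symm.trans ((Fintype.equivFin ι).symm.prodCongr
      (Fintype.equivFin κ).symm)) (fun k : ι × κ => w k.1 * v k.2) (fun k => x k.1 * y k.2)
      (sum_prod_one w v hw hv)
    exact this
  · rw [← sum_prod_one w v hw hv]
    exact Equiv.sum_comp (finProdFinEquiv.symm.trans ((Fintype.equivFin ι).symm.prodCongr
      (Fintype.equivFin κ).symm)) (fun k : ι × κ => w k.1 * v k.2)

lemma G_smul (hmul : S.IsMultiplicative) {ι : Type} [Fintype ι] (w x : ι → ℝ≥0)
    (hw : ∑ i, w i = 1) (c : ℝ≥0) : S.G w (fun i => c * x i) = c * S.G w x := by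
  have h := G_mul hmul (fun _ : Unit => (1 : ℝ≥0)) (fun _ => c) w x (by simp) hw
  rw [S.G_const _ (by simp)] at h
  rw [← h, S.G_equiv (Equiv.punitProd ι).symm (fun k : Unit × ι => 1 * w k.2)]
  · simp
  · exact sum_prod_one (fun _ : Unit => (1 : ℝ≥0)) w (by simp) hw

lemma sum_pow_one {ι : Type} [Fintype ι] (w : ι → ℝ≥0) (N : ℕ) :
    ∑ f : Fin N → ι, ∏ k, w (f k) = (∑ i, w i) ^ N := by
  classical
  rw [← Fin.prod_const, Finset.prod_univ_sum]
  simp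

lemma G_pow (hmul : S.IsMultiplicative) {ι : Type} [Fintype ι] (w x : ι → ℝ≥0)
    (hw : ∑ i, w i = 1) (N : ℕ) :
    S.G (fun f : Fin N → ι => ∏ k, w (f k)) (fun f => ∏ k, x (f k)) = S.G w x ^ N := by
  induction N with
  | zero =>
    simp only [Finset.univ_eq_empty, Finset.prod_empty, pow_zero]
    exact S.G_const _ (by simp) _
  | succ N ih =>
    rw [pow_succ', ← ih, ← G_mul hmul _ _ _ _ hw (by rw [sum_pow_one, hw, one_pow]),
      S.G_equiv (Fin.consEquiv (fun _ : Fin (N + 1) => ι))]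
    · simp [Fin.consEquiv, Fin.prod_univ_succ]
    · rw [sum_pow_one, hw, one_pow]

variable (S) in
/-- The mean of a Bernoulli variable. -/
noncomputable def phi (a : ℝ≥0) : ℝ≥0 :=
  S.G (fun b : Bool => if b then a else 1 - a) (fun b => if b then 1 else 0)

lemma G_ind {ι : Type} [Fintype ι] (w : ι → ℝ≥0) (hw : ∑ i, w i = 1) (A : ι → Prop)
    [DecidablePred A] :
    S.G w (fun i => if A i then 1 else 0) = S.phi (∑ i, if A i then w i else 0) := by
  unfold phi
  rw [S.G_funct (fun i => decide (A i)) w hw]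
  · simp
  · have h : (∑ i, if A i then w i else 0) + (∑ i, if A i then 0 else w i) = 1 := by
      rw [← Finset.sum_add_distrib, ← hw]
      refine Finset.sum_congr rfl fun i _ => ?_
      split_ifs <;> simp
    intro j
    cases j
    · simp only [Bool.false_eq_true, if_false, decide_eq_false_iff_not]
      rw [← h, add_tsub_cancel_left]
      refine Finset.sum_congr rfl fun i _ => ?_
      split_ifs <;> simp_all
    · simp

lemma phi_zero : S.phi 0 = 0 := by
  classical
  have h := G_ind (S := S) (fun _ : Unit => (1 : ℝ≥0)) (by simp) (fun _ => False)
  simp only [if_false, Finset.sum_const_zero] at h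
  rw [← h]
  exact S.G_const _ (by simp) _

lemma phi_one : S.phi 1 = 1 := by
  classical
  have h := G_ind (S := S) (fun _ : Unit => (1 : ℝ≥0)) (by simp) (fun _ => True)
  simp only [if_true] at h
  rw [S.G_const _ (by simp)] at h
  simpa using h.symm

lemma phi_mono {a b : ℝ≥0} (hab : a ≤ b) (hb : b ≤ 1) : S.phi a ≤ S.phi b := by
  classical
  have hw : ∑ i, (![a, b - a, 1 - b] : Fin 3 → ℝ≥0) i = 1 := by
    simp [Fin.sum_univ_three, add_tsub_cancel_of_le hab, add_tsub_cancel_of_le hb]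
  have h1 := G_ind (S := S) _ hw (fun i => i = 0)
  have h2 := G_ind (S := S) _ hw (fun i => i ≠ 2)
  have e1 : (∑ i : Fin 3, if i = 0 then (![a, b - a, 1 - b] : Fin 3 → ℝ≥0) i else 0) = a := by
    simp
  have e2 : (∑ i : Fin 3, if i ≠ 2 then (![a, b - a, 1 - b] : Fin 3 → ℝ≥0) i else 0) = b := by
    simp [Fin.sum_univ_three, add_tsub_cancel_of_le hab]
  rw [e1] at h1
  rw [e2] at h2
  rw [← h1, ← h2]
  refine S.G_mono _ _ _ hw fun i => ?_
  fin_cases i <;> simp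

lemma phi_mul (hmul : S.IsMultiplicative) {a b : ℝ≥0} (ha : a ≤ 1) (hb : b ≤ 1) :
    S.phi (a * b) = S.phi a * S.phi b := by
  classical
  have ha' : ∑ c : Bool, (if c then a else 1 - a) = 1 := by simp [add_tsub_cancel_of_le ha]
  have hb' : ∑ c : Bool, (if c then b else 1 - b) = 1 := by simp [add_tsub_cancel_of_le hb]
  have h := G_ind (S := S) _ (sum_prod_one _ _ ha' hb') (fun k => k.1 = true ∧ k.2 = true)
  rw [phi.eq_def S a, phi.eq_def S b, ← G_mul hmul _ _ _ _ ha' hb']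
  have e : (∑ i : Bool × Bool, if i.1 = true ∧ i.2 = true then
    (if i.1 then a else 1 - a) * (if i.2 then b else 1 - b) else 0) = a * b := by
    simp [Fintype.sum_prod_type]
  rw [e] at h
  rw [← h]
  congr 1
  funext k
  rcases k with ⟨c, d⟩
  cases c <;> cases d <;> simp

lemma phi_pow (hmul : S.IsMultiplicative) {a : ℝ≥0} (ha : a ≤ 1) (n : ℕ) :
    S.phi (a ^ n) = S.phi a ^ n := by
  induction n with
  | zero => simp [phi_one]
  | succ n ih => rw [pow_succ, phi_mul hmul (pow_le_one₀ (zero_le) ha) ha, ih, pow_succ]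

lemma phi_half (hconv : S.IsConvex) : (1 / 2 : ℝ≥0) ≤ S.phi (1 / 2) := by
  classical
  have hw : ∑ i : Bool, (fun _ : Bool => (1 / 2 : ℝ≥0)) i = 1 := by
    simp
  have h := G_convex hconv _ (fun b => if b = true then 1 else 0) (fun b => if b = false then 1 else 0) hw
  rw [G_ind _ hw (fun b => b = true), G_ind _ hw (fun b => b = false)] at h
  have e : (fun i : Bool => ((if i = true then (1 : ℝ≥0) else 0) + (if i = false then 1 else 0)) / 2)
      = fun _ => 1 / 2 := by
    funext i; cases i <;> simp
  rw [e, S.G_const _ hw] at h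
  simpa using h

lemma phi_eq (hconv : S.IsConvex) (hmul : S.IsMultiplicative) :
    ∃ s : ℝ, 0 ≤ s ∧ s ≤ 1 ∧ ∀ a : ℝ≥0, 0 < a → a ≤ 1 → S.phi a = a ^ s := by
  have h2 := phi_half hconv
  have hle : ∀ a : ℝ≥0, a ≤ 1 → S.phi a ≤ 1 := fun a ha => by
    rw [← phi_one (S := S)]; exact phi_mono ha le_rfl
  have hhalf : (1 / 2 : ℝ≥0) ≤ 1 := by
    rw [← NNReal.coe_le_coe]; norm_num
  have h2pos : (0 : ℝ≥0) < S.phi (1 / 2) := lt_of_lt_of_le (by norm_num) h2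
  have hpos : ∀ a : ℝ≥0, 0 < a → a ≤ 1 → 0 < S.phi a := by
    intro a ha h
    obtain ⟨n, hn⟩ := exists_pow_lt_of_lt_one ha (show (1 / 2 : ℝ≥0) < 1 by
      rw [← NNReal.coe_lt_coe]; norm_num)
    refine lt_of_lt_of_le ?_ (phi_mono hn.le h)
    rw [phi_pow hmul hhalf]
    exact pow_pos h2pos n
  have hl2 : 0 < Real.log 2 := Real.log_pos (by norm_num)
  have hlogle : ∀ a b : ℝ≥0, 0 < a → a ≤ b → Real.log a ≤ Real.log b := fun a b ha hab =>
    Real.log_le_log (by exact_mod_cast ha) (by exact_mod_cast hab)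
  -- `T` is the negated logarithm of `phi (1/2)`
  set T : ℝ := -Real.log (S.phi (1 / 2)) with hT
  have hT0 : 0 ≤ T := by
    have := hlogle _ _ h2pos (hle _ hhalf)
    simp at this
    simp only [hT]
    simp
    linarith
  have hT1 : T ≤ Real.log 2 := by
    have := hlogle _ _ (by norm_num) h2
    have e : Real.log ((1 / 2 : ℝ≥0) : ℝ) = - Real.log 2 := by
      rw [← Real.log_inv]; norm_num
    rw [e] at this
    linarith
  refine ⟨T / Real.log 2, by positivity, (div_le_one hl2).2 hT1, fun a ha ha1 => ?_⟩
  have hpa := hpos a ha ha1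
  set L : ℝ := -Real.log (S.phi a) with hL
  set l : ℝ := -Real.log a with hl
  have hl0 : 0 ≤ l := by
    have := hlogle _ _ ha ha1
    simp at this
    simp only [hl]
    linarith
  have key : ∀ n : ℕ, n * L ≤ n * (l * (T / Real.log 2)) + T ∧
      n * (l * (T / Real.log 2)) ≤ n * L + T := by
    intro n
    set k := ⌊n * l / Real.log 2⌋₊ with hk
    have k1 : k * Real.log 2 ≤ n * l := by
      rw [← le_div_iff₀ hl2]; exact Nat.floor_le (by positivity)
    have k2 : n * l ≤ (k + 1) * Real.log 2 := by
      rw [← div_le_iff₀ hl2]; exact (Nat.lt_floor_add_one _).le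
    have q1 : a ^ n ≤ (1 / 2) ^ k := by
      rw [← NNReal.coe_le_coe, ← Real.log_le_log_iff (by positivity) (by positivity)]
      push_cast
      rw [Real.log_pow, Real.log_pow, one_div, Real.log_inv]
      simp only [hl] at k1
      linarith
    have q2 : (1 / 2) ^ (k + 1) ≤ a ^ n := by
      rw [← NNReal.coe_le_coe, ← Real.log_le_log_iff (by positivity) (by positivity)]
      push_cast
      rw [Real.log_pow, Real.log_pow, one_div, Real.log_inv]
      simp only [hl] at k2
      push_cast
      linarith
    have r1 := phi_mono (S := S) q1 (pow_le_one₀ zero_le hhalf)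
    have r2 := phi_mono (S := S) q2 (pow_le_one₀ zero_le ha1)
    rw [phi_pow hmul hhalf, phi_pow hmul ha1] at r1 r2
    have r1' := hlogle _ _ (pow_pos hpa _) r1
    have r2' := hlogle _ _ (pow_pos h2pos _) r2
    rw [NNReal.coe_pow, NNReal.coe_pow, Real.log_pow, Real.log_pow] at r1' r2'
    push_cast at r2'
    have s1 : k * T ≤ n * L := by rw [hT, hL]; linarith
    have s2 : n * L ≤ (k + 1) * T := by rw [hT, hL]; linarith
    have u1 : k * T ≤ n * (l * (T / Real.log 2)) := by
      have := mul_le_mul_of_nonneg_right k1 (show 0 ≤ T / Real.log 2 by positivity)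
      have e : k * Real.log 2 * (T / Real.log 2) = k * T := by field_simp
      linarith
    have u2 : n * (l * (T / Real.log 2)) ≤ (k + 1) * T := by
      have := mul_le_mul_of_nonneg_right k2 (show 0 ≤ T / Real.log 2 by positivity)
      have e : (k + 1) * Real.log 2 * (T / Real.log 2) = (k + 1) * T := by field_simp
      linarith
    constructor <;> linarith
  have arch : ∀ d : ℝ, (∀ n : ℕ, n * d ≤ T) → d ≤ 0 := by
    intro d hd
    by_contra hcon
    push Not at hcon
    obtain ⟨n, hn⟩ := exists_nat_gt (T / d)
    rw [div_lt_iff₀ hcon] at hn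
    linarith [hd n]
  have eL : L = l * (T / Real.log 2) := by
    apply le_antisymm
    · have := arch (L - l * (T / Real.log 2)) fun n => by linarith [(key n).1]
      linarith
    · have := arch (l * (T / Real.log 2) - L) fun n => by linarith [(key n).2]
      linarith
  have hpa' : (0 : ℝ) < S.phi a := by exact_mod_cast hpa
  have ha' : (0 : ℝ) < a := by exact_mod_cast ha
  apply NNReal.coe_injective
  rw [NNReal.coe_rpow, Real.rpow_def_of_pos ha', ← Real.exp_log hpa']
  congr 1
  simp only [hL, hl] at eL
  linarith

lemma G_sum_le (hconv : S.IsConvex) (hmul : S.IsMultiplicative) {ι κ : Type} [Fintype ι]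
    (w : ι → ℝ≥0) (hw : ∑ i, w i = 1) (g : κ → ι → ℝ≥0) (B : ℝ≥0) (k : ℕ) :
    ∀ s : Finset κ, s.card ≤ 2 ^ k → (∀ c ∈ s, S.G w (g c) ≤ B) →
      S.G w (fun i => ∑ c ∈ s, g c i) ≤ 2 ^ k * B := by
  classical
  induction k with
  | zero =>
    intro s hs h
    rcases s.eq_empty_or_nonempty with rfl | hne
    · simp only [Finset.sum_empty]
      rw [S.G_const w hw]
      exact zero_le
    · obtain ⟨c, rfl⟩ := Finset.card_eq_one.1 (le_antisymm hs hne.card_pos)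
      simpa using h c
  | succ k ih =>
    intro s hs h
    obtain ⟨t, hts, ht⟩ := Finset.exists_subset_card_eq (s := s) (n := min s.card (2 ^ k))
      (min_le_left _ _)
    have h1 := ih t (by omega) fun c hc => h c (hts hc)
    have h2 := ih (s \ t) (by rw [Finset.card_sdiff_of_subset hts]; rw [pow_succ] at hs; omega)
      fun c hc => h c (Finset.sdiff_subset hc)
    have h3 := G_convex hconv w _ _ hw |>.trans (max_le h1 h2)
    have h4 : (fun i => ∑ c ∈ s, g c i) =
        fun i => 2 * ((∑ c ∈ t, g c i + ∑ c ∈ s \ t, g c i) / 2) := by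
      funext i
      rw [mul_div_cancel₀ _ (by norm_num), add_comm, Finset.sum_sdiff hts]
    rw [h4, G_smul hmul w _ hw, pow_succ', mul_assoc]
    gcongr

lemma G_single (hmul : S.IsMultiplicative) {ι : Type} [Fintype ι] [DecidableEq ι]
    (w : ι → ℝ≥0) (hw : ∑ i, w i = 1) (c : ι) (t : ℝ≥0) :
    S.G w (fun i => if i = c then t else 0) = t * S.phi (w c) := by
  have h := G_ind (S := S) w hw (fun i => i = c)
  have e : (∑ i, if i = c then w i else 0) = w c := by simp
  rw [e] at h
  rw [← h, ← G_smul hmul w _ hw]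
  congr 1
  funext i
  split_ifs <;> simp

lemma le_one_sum {ι : Type} [Fintype ι] {w : ι → ℝ≥0} (hw : ∑ i, w i = 1) (c : ι) : w c ≤ 1 := by
  rw [← hw]; exact Finset.single_le_sum (fun _ _ => zero_le) (Finset.mem_univ c)

lemma single_le (hmul : S.IsMultiplicative) {ι : Type} [Fintype ι] 
    (w x : ι → ℝ≥0) (hw : ∑ i, w i = 1) (c : ι) : x c * S.phi (w c) ≤ S.G w x := by
  classical
  rw [← G_single hmul w hw]
  refine S.G_mono _ _ _ hw fun i => ?_
  split_ifs with h <;> simp [h]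

/-- Crude bounds. -/
lemma crude_lower (hmul : S.IsMultiplicative) {p : ℝ} (hp : 1 ≤ p)
    (hphi : ∀ a : ℝ≥0, a ≤ 1 → S.phi a ^ p = a)
    {ι : Type} [Fintype ι] (w x : ι → ℝ≥0) (hw : ∑ i, w i = 1) :
    ∑ i, w i * x i ^ p ≤ Fintype.card ι * S.G w x ^ p := by
  have : ∀ i ∈ Finset.univ, w i * x i ^ p ≤ S.G w x ^ p := by
    intro i _
    calc w i * x i ^ p = (x i * S.phi (w i)) ^ p := by
          rw [NNReal.mul_rpow, hphi _ (le_one_sum hw i), mul_comm]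
      _ ≤ _ := NNReal.rpow_le_rpow (single_le hmul w x hw i) (by linarith)
  simpa using Finset.sum_le_card_nsmul _ _ _ this

lemma crude_upper (hconv : S.IsConvex) (hmul : S.IsMultiplicative) {p : ℝ} (hp : 1 ≤ p)
    (hphi : ∀ a : ℝ≥0, a ≤ 1 → S.phi a ^ p = a)
    {ι : Type} [Fintype ι] (w x : ι → ℝ≥0) (hw : ∑ i, w i = 1) (hc : 0 < Fintype.card ι) :
    S.G w x ≤ 2 * Fintype.card ι * (∑ i, w i * x i ^ p) ^ (1 / p) := by
  classical
  have hp0 : p ≠ 0 := by linarith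
  have key := G_sum_le hconv hmul w hw (fun c i => if i = c then x c else 0)
    ((∑ i, w i * x i ^ p) ^ (1 / p)) (Nat.log 2 (Fintype.card ι) + 1) Finset.univ
    (Nat.lt_pow_succ_log_self (by norm_num) _).le (by
      intro c _
      rw [G_single hmul w hw, one_div, NNReal.le_rpow_inv_iff (by linarith), NNReal.mul_rpow,
        hphi _ (le_one_sum hw c), mul_comm]
      exact Finset.single_le_sum (f := fun i => w i * x i ^ p) (fun _ _ => zero_le)
        (Finset.mem_univ c))
  simp only [Finset.sum_ite_eq, Finset.mem_univ, if_true] at key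
  refine key.trans ?_
  gcongr
  rw [pow_succ']
  gcongr
  exact_mod_cast Nat.pow_log_le_self 2 (Nat.pos_iff_ne_zero.1 hc)

/-- The reduction to types: `N`-th tensor power is indexed by count vectors. -/
lemma types (hmul : S.IsMultiplicative) {p : ℝ}
    {ι : Type} [Fintype ι] [DecidableEq ι] (w x : ι → ℝ≥0) (hw : ∑ i, w i = 1) (N : ℕ) :
    ∃ v t : (ι → Fin (N + 1)) → ℝ≥0, ∑ c, v c = 1 ∧ S.G v t = S.G w x ^ N ∧
      ∑ c, v c * t c ^ p = (∑ i, w i * x i ^ p) ^ N := by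
  classical
  let cnt : (Fin N → ι) → (ι → Fin (N + 1)) := fun f j =>
    ⟨(Finset.univ.filter (fun k => f k = j)).card,
      Nat.lt_succ_of_le ((Finset.card_filter_le _ _).trans (by simp))⟩
  have ht : ∀ f : Fin N → ι, ∏ j, x j ^ (cnt f j : ℕ) = ∏ k, x (f k) := by
    intro f
    rw [← Finset.prod_fiberwise Finset.univ f]
    refine Finset.prod_congr rfl fun j _ => ?_
    rw [Finset.prod_congr rfl (g := fun _ => x j), Finset.prod_const]
    intro k hk
    rw [(Finset.mem_filter.mp hk).2]
  have hfib : ∀ u : (ι → Fin (N + 1)) → ℝ≥0,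
      ∑ c, (∑ f : Fin N → ι, if cnt f = c then ∏ k, w (f k) else 0) * u c
        = ∑ f : Fin N → ι, (∏ k, w (f k)) * u (cnt f) := by
    intro u
    simp_rw [Finset.sum_mul]
    rw [Finset.sum_comm]
    simp [ite_mul]
  have hw1 : ∑ f : Fin N → ι, ∏ k, w (f k) = 1 := by rw [sum_pow_one, hw, one_pow]
  refine ⟨fun c => ∑ f : Fin N → ι, if cnt f = c then ∏ k, w (f k) else 0,
    fun c => ∏ j, x j ^ (c j : ℕ), ?_, ?_, ?_⟩
  · have := hfib (fun _ => 1)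
    simpa [hw1] using this
  · rw [← G_pow hmul w x hw, S.G_funct cnt (fun f => ∏ k, w (f k)) hw1 _ _ (fun c => by
      refine Finset.sum_congr rfl fun f _ => ?_
      congr 1)]
    simp_rw [ht]
  · rw [hfib (fun c => (∏ j, x j ^ (c j : ℕ)) ^ p), ← sum_pow_one]
    refine Finset.sum_congr rfl fun f _ => ?_
    rw [ht, Finset.prod_mul_distrib, NNReal.finsetProd_rpow]

lemma le_of_pow_le (a b : ℝ≥0) (m : ℕ) (h : ∀ N : ℕ, a ^ N ≤ 2 * (N + 1) ^ m * b ^ N) : a ≤ b := by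
  by_contra hab
  push Not at hab
  have ha : (0 : ℝ) < a := by exact_mod_cast lt_of_le_of_lt zero_le hab
  obtain ⟨c, hbc, hca⟩ := exists_between hab
  have hc : (0 : ℝ) < c := by exact_mod_cast lt_of_le_of_lt zero_le hbc
  have hr : 1 < (a : ℝ) / c := (one_lt_div hc).2 (by exact_mod_cast hca)
  have ht := ((tendsto_pow_const_div_const_pow_of_one_lt m hr).comp
    (Filter.tendsto_add_atTop_nat 1)).eventually
      (gt_mem_nhds (show (0 : ℝ) < 1 / (2 * (a / c)) by positivity))
  obtain ⟨N, hN⟩ := ht.exists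
  simp only [Function.comp] at hN
  rw [div_lt_div_iff₀ (by positivity) (by positivity), one_mul, pow_succ, ← mul_assoc] at hN
  have hN' := lt_of_mul_lt_mul_right hN (by positivity : (0 : ℝ) ≤ a / c)
  rw [div_pow, lt_div_iff₀ (by positivity)] at hN'
  have h1 : (a : ℝ) ^ N ≤ 2 * (N + 1) ^ m * b ^ N := by exact_mod_cast h N
  have h2 : (2 : ℝ) * (N + 1) ^ m * b ^ N ≤ 2 * (N + 1) ^ m * c ^ N := by
    have : (b : ℝ) ≤ c := by exact_mod_cast hbc.le
    gcongr
  push_cast at hN'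
  linarith

lemma G_eq (hconv : S.IsConvex) (hmul : S.IsMultiplicative) {p : ℝ} (hp : 1 ≤ p)
    (hphi : ∀ a : ℝ≥0, a ≤ 1 → S.phi a ^ p = a)
    {ι : Type} [Fintype ι] (w x : ι → ℝ≥0) (hw : ∑ i, w i = 1) :
    S.G w x = (∑ i, w i * x i ^ p) ^ (1 / p) := by
  classical
  have hp0 : 0 < p := by linarith
  apply le_antisymm
  · apply le_of_pow_le _ _ (Fintype.card ι)
    intro N
    obtain ⟨v, t, hv, h1, h2⟩ := types hmul (p := p) w x hw N
    have := crude_upper hconv hmul hp hphi v t hv Fintype.card_pos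
    rw [h1, h2] at this
    rw [← NNReal.rpow_natCast (_ ^ (1 / p)), ← NNReal.rpow_mul, mul_comm (1 / p), NNReal.rpow_mul,
      NNReal.rpow_natCast]
    simpa using this
  · rw [one_div, NNReal.rpow_inv_le_iff hp0]
    apply le_of_pow_le _ _ (Fintype.card ι)
    intro N
    obtain ⟨v, t, hv, h1, h2⟩ := types hmul (p := p) w x hw N
    have := crude_lower hmul hp hphi v t hv
    rw [h1, h2] at this
    rw [← NNReal.rpow_natCast (S.G w x ^ p), ← NNReal.rpow_mul, mul_comm p, NNReal.rpow_mul,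
      NNReal.rpow_natCast]
    refine this.trans ?_
    gcongr
    simp only [Fintype.card_pi, Fintype.card_fin, Finset.prod_const, Finset.card_univ]
    push_cast
    exact le_mul_of_one_le_left (zero_le) (by norm_num)

lemma G_eq_top (hmul : S.IsMultiplicative)
    (hphi : ∀ a : ℝ≥0, 0 < a → a ≤ 1 → S.phi a = 1)
    {ι : Type} [Fintype ι] (w x : ι → ℝ≥0) (hw : ∑ i, w i = 1) :
    S.G w x = (Finset.univ.filter (fun i => 0 < w i)).sup x := by
  classical
  apply le_antisymm
  · have hs : ∑ i : {i // 0 < w i}, w i = 1 := by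
      rw [← hw, ← Finset.sum_subtype (Finset.univ.filter (fun i => 0 < w i)) (by simp) w,
        Finset.sum_filter]
      refine Finset.sum_congr rfl fun i _ => ?_
      split_ifs with h
      · rfl
      · simpa [eq_comm] using h
    rw [S.G_funct (fun i : {i // 0 < w i} => (i : ι)) (fun i => w i) hs]
    · refine (S.G_mono _ _ (fun _ => (Finset.univ.filter (fun i => 0 < w i)).sup x) hs ?_).trans
        (S.G_const _ hs _).le
      intro i
      exact Finset.le_sup (f := x) (by simp [i.2])
    · intro j
      by_cases hj : 0 < w j
      · rw [Finset.sum_eq_single ⟨j, hj⟩] <;> simp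
        intro a _ h1 h2
        exact absurd h2 h1
      · rw [Finset.sum_eq_zero]
        · simpa using hj
        · intro i _
          rw [if_neg]
          rintro rfl
          exact hj i.2
  · refine Finset.sup_le fun i hi => ?_
    have := single_le hmul w x hw i
    rwa [hphi _ (Finset.mem_filter.mp hi).2 (le_one_sum hw i), mul_one] at this

end MeanSystem

/-- Every convex multiplicative system of means is the power mean `M_p`
for some `p ∈ [1,∞]`. -/
theorem convex_multiplicative_meanSystem_eq_powerMean
    (S : MeanSystem) (hconv : S.IsConvex) (hmul : S.IsMultiplicative) :
    ∃ p : ℝ≥0∞, 1 ≤ p ∧ ∀ (n : ℕ), 1 ≤ n → ∀ (w x : Fin n → ℝ≥0),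
      (∑ i, w i) = 1 → S.M n w x = powerMean p w x := by
  obtain ⟨s, hs0, hs1, hs⟩ := MeanSystem.phi_eq hconv hmul
  rcases hs0.eq_or_lt with rfl | hpos
  · refine ⟨∞, le_top, fun n _ w x hw => ?_⟩
    rw [← S.G_fin w x hw, powerMean, if_pos rfl]
    exact MeanSystem.G_eq_top hmul (fun a h0 h1 => by rw [hs a h0 h1, NNReal.rpow_zero]) w x hw
  · have hp : 1 ≤ s⁻¹ := (one_le_inv₀ hpos).2 hs1
    refine ⟨ENNReal.ofReal s⁻¹, by simpa using hp, fun n _ w x hw => ?_⟩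
    have h0 : ENNReal.ofReal s⁻¹ ≠ 0 := by simpa using hpos
    rw [← S.G_fin w x hw, powerMean, if_neg ENNReal.ofReal_ne_top, if_neg h0,
      ENNReal.toReal_ofReal (by positivity)]
    refine MeanSystem.G_eq hconv hmul hp (fun a ha => ?_) w x hw
    rcases (zero_le (a := a)).eq_or_lt with rfl | h
    · rw [MeanSystem.phi_zero, NNReal.zero_rpow (by positivity)]
    · rw [hs a h ha, ← NNReal.rpow_mul, mul_inv_cancel₀ hpos.ne', NNReal.rpow_one]
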